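/- arXiv:2303.14507 — 4 statements merged into one kernel-verified Lean document; each statement's English description precedes it below -/
import Mathlib

section
/- Let M be an admissible weight sequence and set Λ_k = M_k^{1/k} for k ≥ 1. Then there exists a constant σ > 1 such that the following holds: for each integer k ≥ 1 there is a sequence (k_j)_{j≥0} of positive integers with Λ_{k_0} ≤ Λ_k and σ^{j−1} Λ_k ≤ Λ_{k_j} ≤ σ^j Λ_k for all j ≥ 1. -/
open MeasureTheory Filter Finset

noncomputable section

/-- `M` is a weight sequence: positivity, `M₀ = 1`, `M₁ ≥ 1`, log-convexity, and
`M_k^{1/k} → ∞`. -/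
def IsWeightSeq (M : ℕ → ℝ) : Prop :=
  (∀ k, 0 < M k) ∧ M 0 = 1 ∧ 1 ≤ M 1 ∧
    (∀ k : ℕ, (M (k + 1)) ^ 2 ≤ M k * M (k + 2)) ∧
    Tendsto (fun k : ℕ => (M k) ^ ((k : ℝ)⁻¹)) atTop atTop

/-- `Λ_k = M_k^{1/k}`. -/
def Lam (M : ℕ → ℝ) (k : ℕ) : ℝ := (M k) ^ ((k : ℝ)⁻¹)

/-- Condition (i): there are `C, h > 0` with `k! ≤ C h^k M_k` for all `k`. -/
def FactBound (M : ℕ → ℝ) : Prop :=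
  ∃ C > 0, ∃ h > 0, ∀ k : ℕ, (k.factorial : ℝ) ≤ C * h ^ k * M k

/-- Condition (mg): there is `A > 0` with `M_{j+k} ≤ A^{j+k} M_j M_k` for all `j, k`. -/
def MG (M : ℕ → ℝ) : Prop := ∃ A > 0, ∀ j k : ℕ, M (j + k) ≤ A ^ (j + k) * M j * M k

/-- Admissible weight sequence. -/
def IsAdmissible (M : ℕ → ℝ) : Prop := IsWeightSeq M ∧ FactBound M ∧ MG M

/-
After enlarging `A`, condition (mg) gives `M_{n+1} ≤ A^{n+1} M_n`, so `Λ_{n+1} ≤ A max(1, Λ_n)`.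
Since `Λ` is positive and tends to infinity it stays away from `0`, so this becomes
`Λ_{n+1} ≤ σ Λ_n`. A sequence that grows at most by the factor `σ` at each step cannot jump over any
of the intervals `[σ^j Λ_k, σ^{j+1} Λ_k]`: the first index `n ≥ k` with `σ^j Λ_k ≤ Λ_n` lands in it.
-/

theorem exists_mem_Icc_of_succ_le {α : Type*} [LinearOrder α] {a : ℕ → α} {f : α → α} {k : ℕ}
    {y : α} (hf : Monotone f) (hstep : ∀ n ≥ k, a (n + 1) ≤ f (a n)) (hk : a k ≤ f y)
    (hex : ∃ n ≥ k, y ≤ a n) : ∃ n ≥ k, a n ∈ Set.Icc y (f y) := by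
  classical
  obtain ⟨hkn, hyn⟩ := Nat.find_spec hex
  refine ⟨Nat.find hex, hkn, hyn, ?_⟩
  rcases hkn.eq_or_lt with hk_eq | hk_lt
  · rwa [← hk_eq]
  · obtain ⟨m, hm⟩ := Nat.exists_eq_add_one_of_ne_zero (Nat.ne_zero_of_lt hk_lt)
    have hkm : k ≤ m := by omega
    have hmy : a m < y := by
      by_contra! hym
      exact Nat.find_min hex (by omega) ⟨hkm, hym⟩
    calc a (Nat.find hex) = a (m + 1) := by rw [hm]
      _ ≤ f (a m) := hstep m hkm
      _ ≤ f y := hf hmy.le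

theorem exists_seq_mem_Icc_pow_mul {R : Type*} [Semiring R] [LinearOrder R] [IsOrderedRing R]
    {a : ℕ → R} {σ : R} {k : ℕ} (hσ : 1 ≤ σ) (hlim : Tendsto a atTop atTop) (hk : 0 ≤ a k)
    (hstep : ∀ n ≥ k, a (n + 1) ≤ σ * a n) :
    ∃ u : ℕ → ℕ, (∀ j, k ≤ u j) ∧ u 0 = k ∧
      ∀ j, a (u (j + 1)) ∈ Set.Icc (σ ^ j * a k) (σ ^ (j + 1) * a k) := by
  have hσ_nonneg : 0 ≤ σ := zero_le_one.trans hσ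
  have hind (j : ℕ) : ∃ n ≥ k, a n ∈ Set.Icc (σ ^ j * a k) (σ ^ (j + 1) * a k) := by
    have hstart : a k ≤ σ ^ (j + 1) * a k := le_mul_of_one_le_left hk (one_le_pow₀ hσ)
    rw [pow_succ', mul_assoc] at hstart ⊢
    exact exists_mem_Icc_of_succ_le (monotone_mul_left_of_nonneg hσ_nonneg) hstep hstart
      ((eventually_ge_atTop k).and (hlim.eventually_ge_atTop _)).exists
  choose v hkv hv using hind
  exact ⟨fun j => Nat.casesOn j k v, fun j => Nat.casesOn j le_rfl hkv, rfl, hv⟩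

theorem exists_max_one_le_mul {K : Type*} [Field K] [LinearOrder K] [IsStrictOrderedRing K]
    {a : ℕ → K} (hpos : ∀ n, 0 < a n) (hlim : Tendsto a atTop atTop) :
    ∃ B, ∀ n, max 1 (a n) ≤ B * a n := by
  obtain ⟨m, hm⟩ := (Nat.cofinite_eq_atTop ▸ hlim).exists_forall_le
  refine ⟨max (a m)⁻¹ 1, fun n => max_le ?_ ?_⟩
  · calc 1 = (a m)⁻¹ * a m := (inv_mul_cancel₀ (hpos m).ne').symm
      _ ≤ max (a m)⁻¹ 1 * a n :=
        mul_le_mul (le_max_left _ _) (hm n) (hpos m).le (zero_le_one.trans (le_max_right _ _))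
  · exact le_mul_of_one_le_left (hpos n).le (le_max_right _ _)

/-- Derivation closedness, condition (dc) in the literature on weight sequences: the case `k = 1`
of (mg), with the constant `M 1` absorbed into `A`. -/
def DerivClosed (M : ℕ → ℝ) : Prop := ∃ A > 0, ∀ n : ℕ, M (n + 1) ≤ A ^ (n + 1) * M n

theorem MG.derivClosed {M : ℕ → ℝ} (hmg : MG M) (hpos : ∀ k, 0 < M k) : DerivClosed M := by
  obtain ⟨A, hA, hmg⟩ := hmg
  refine ⟨A * max 1 (M 1), by positivity, fun n => ?_⟩
  have hM1 : M 1 ≤ max 1 (M 1) ^ (n + 1) :=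
    (le_max_right 1 (M 1)).trans (le_self_pow₀ (le_max_left 1 (M 1)) n.succ_ne_zero)
  have hn := (hpos n).le
  calc M (n + 1) ≤ A ^ (n + 1) * M n * M 1 := hmg n 1
    _ ≤ A ^ (n + 1) * M n * max 1 (M 1) ^ (n + 1) := by gcongr
    _ = (A * max 1 (M 1)) ^ (n + 1) * M n := by ring

section Lam

variable {M : ℕ → ℝ}

theorem lam_pos {n : ℕ} (hn : 0 < M n) : 0 < Lam M n :=
  Real.rpow_pos_of_pos hn _

theorem lam_pow {n : ℕ} (hM : 0 ≤ M n) (hn : n ≠ 0) : Lam M n ^ n = M n :=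
  Real.rpow_inv_natCast_pow hM hn

theorem lam_succ_le_mul_max {A : ℝ} {n : ℕ} (hn : n ≠ 0) (hA : 0 ≤ A) (hMn : 0 ≤ M n)
    (hMsucc : 0 ≤ M (n + 1)) (h : M (n + 1) ≤ A ^ (n + 1) * M n) :
    Lam M (n + 1) ≤ A * max 1 (Lam M n) := by
  have hLam : 0 ≤ Lam M n := Real.rpow_nonneg hMn _
  refine le_of_pow_le_pow_left₀ n.succ_ne_zero (by positivity) ?_
  calc Lam M (n + 1) ^ (n + 1) = M (n + 1) := lam_pow hMsucc n.succ_ne_zero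
    _ ≤ A ^ (n + 1) * M n := h
    _ = A ^ (n + 1) * Lam M n ^ n := by rw [lam_pow hMn hn]
    _ ≤ A ^ (n + 1) * max 1 (Lam M n) ^ n := by gcongr; exact le_max_right _ _
    _ ≤ A ^ (n + 1) * max 1 (Lam M n) ^ (n + 1) := by
      gcongr
      · exact le_max_left _ _
      · exact n.le_succ
    _ = (A * max 1 (Lam M n)) ^ (n + 1) := (mul_pow _ _ _).symm

theorem DerivClosed.exists_lam_succ_le_mul (hdc : DerivClosed M) (hpos : ∀ k, 0 < M k)
    (hlim : Tendsto (Lam M) atTop atTop) :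
    ∃ σ : ℝ, 1 < σ ∧ ∀ n ≠ 0, Lam M (n + 1) ≤ σ * Lam M n := by
  obtain ⟨A, hA, hdc⟩ := hdc
  obtain ⟨B, hB⟩ := exists_max_one_le_mul (fun n => lam_pos (hpos n)) hlim
  refine ⟨max 2 (A * B), lt_max_of_lt_left one_lt_two, fun n hn => ?_⟩
  have hLam := (lam_pos (hpos n)).le
  calc Lam M (n + 1) ≤ A * max 1 (Lam M n) :=
        lam_succ_le_mul_max hn hA.le (hpos n).le (hpos (n + 1)).le (hdc n)
    _ ≤ A * (B * Lam M n) := by gcongr; exact hB n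
    _ = A * B * Lam M n := (mul_assoc _ _ _).symm
    _ ≤ max 2 (A * B) * Lam M n := by gcongr; exact le_max_right _ _

end Lam

theorem statement0_general (M : ℕ → ℝ) (hpos : ∀ k, 0 < M k)
    (hlim : Tendsto (Lam M) atTop atTop) (hdc : DerivClosed M) :
    ∃ σ : ℝ, 1 < σ ∧ ∀ k : ℕ, 1 ≤ k → ∃ kj : ℕ → ℕ,
      (∀ j, 1 ≤ kj j) ∧ Lam M (kj 0) ≤ Lam M k ∧
      ∀ j : ℕ, 1 ≤ j →
        σ ^ (j - 1) * Lam M k ≤ Lam M (kj j) ∧ Lam M (kj j) ≤ σ ^ j * Lam M k := by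
  obtain ⟨σ, hσ, hstep⟩ := hdc.exists_lam_succ_le_mul hpos hlim
  refine ⟨σ, hσ, fun k hk => ?_⟩
  obtain ⟨kj, hkj, hkj_zero, hkj_succ⟩ := exists_seq_mem_Icc_pow_mul hσ.le hlim
    (lam_pos (hpos k)).le fun n hn => hstep n (Nat.one_le_iff_ne_zero.mp (hk.trans hn))
  refine ⟨kj, fun j => hk.trans (hkj j), by rw [hkj_zero], fun j hj => ?_⟩
  obtain ⟨i, rfl⟩ := Nat.exists_eq_add_of_le' hj
  exact hkj_succ i

/-- Lemma 1 of the paper: if `M` is an admissible weight sequence then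
there is `σ > 1` such that for each `k ≥ 1` there is a sequence `(k_j)` of positive integers
with `Λ_{k_0} ≤ Λ_k` and `σ^{j-1} Λ_k ≤ Λ_{k_j} ≤ σ^j Λ_k` for all `j ≥ 1`. -/
theorem statement0 (M : ℕ → ℝ) (hM : IsAdmissible M) :
    ∃ σ : ℝ, 1 < σ ∧ ∀ k : ℕ, 1 ≤ k → ∃ kj : ℕ → ℕ,
      (∀ j, 1 ≤ kj j) ∧ Lam M (kj 0) ≤ Lam M k ∧
      ∀ j : ℕ, 1 ≤ j →
        σ ^ (j - 1) * Lam M k ≤ Lam M (kj j) ∧ Lam M (kj j) ≤ σ ^ j * Lam M k :=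
  statement0_general M hM.1.1 hM.1.2.2.2.2 (hM.2.2.derivClosed hM.1.1)

end
end

section
/- Let M be an admissible weight sequence and set Λ_k = M_k^{1/k} for k ≥ 1. Then there exists a constant H ≥ 1 such that ω_M(Λ_k) ≤ H k for all k ≥ 1, where ω_M is the weight function associated to M. -/
/-!
Log-convexity and `M₀ ≤ 1` make `Λ_k` increasing in `k ≥ 1`. If `k ≤ j`, then
`Λ_k^j ≤ Λ_j^j = M_j`. If `k = j + i`, then `M_i ≤ Λ_k^i`, so by (mg)
`Λ_k^j M_i ≤ Λ_k^j Λ_k^i = M_k ≤ A^k M_j M_i`, and `M_i` cancels. Since (mg) forces `A ≥ 1`, in both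
cases `Λ_k^j / M_j ≤ A^k`, hence `ω_M(Λ_k) ≤ k log A`.
-/

open MeasureTheory Filter Finset

noncomputable section

/-- The weight function `ω_M` associated to `M`. -/
def omegaM (M : ℕ → ℝ) (t : ℝ) : ℝ := ⨆ k : ℕ, Real.log (t ^ k / M k)

theorem pow_succ_le_succ_pow_of_sq_le_mul {R : Type*} [CommSemiring R] [LinearOrder R]
    [IsStrictOrderedRing R] {M : ℕ → R} (hpos : ∀ k, 0 < M k) (h0 : M 0 ≤ 1)
    (hlc : ∀ k, M (k + 1) ^ 2 ≤ M k * M (k + 2)) (n : ℕ) : M n ^ (n + 1) ≤ M (n + 1) ^ n := by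
  induction n with
  | zero => simpa using h0
  | succ n ih =>
    refine le_of_mul_le_mul_left ?_ (pow_pos (hpos (n + 1)) n)
    calc M (n + 1) ^ n * M (n + 1) ^ (n + 1 + 1)
        = (M (n + 1) ^ 2) ^ (n + 1) := by ring
      _ ≤ (M n * M (n + 2)) ^ (n + 1) := pow_le_pow_left₀ (pow_pos (hpos _) 2).le (hlc n) _
      _ = M n ^ (n + 1) * M (n + 2) ^ (n + 1) := mul_pow ..
      _ ≤ M (n + 1) ^ n * M (n + 2) ^ (n + 1) :=
        mul_le_mul_of_nonneg_right ih (pow_pos (hpos _) _).le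

section

variable {M : ℕ → ℝ} {i j k : ℕ}

theorem lam_pos_s1 (hk : 0 < M k) : 0 < Lam M k :=
  Real.rpow_pos_of_pos hk _

theorem lam_pow_self (hM : 0 ≤ M k) (hk : k ≠ 0) : Lam M k ^ k = M k :=
  Real.rpow_inv_natCast_pow hM hk

theorem monotoneOn_lam_of_sq_le_mul (hpos : ∀ k, 0 < M k) (h0 : M 0 ≤ 1)
    (hlc : ∀ k, M (k + 1) ^ 2 ≤ M k * M (k + 2)) : MonotoneOn (Lam M) (Set.Ici 1) := by
  refine monotoneOn_nat_Ici_of_le_succ fun n hn => ?_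
  refine le_of_pow_le_pow_left₀ (n := n * (n + 1)) (by positivity) (lam_pos_s1 (hpos _)).le ?_
  calc Lam M n ^ (n * (n + 1))
      = M n ^ (n + 1) := by rw [pow_mul, lam_pow_self (hpos n).le (by lia)]
    _ ≤ M (n + 1) ^ n := pow_succ_le_succ_pow_of_sq_le_mul hpos h0 hlc n
    _ = Lam M (n + 1) ^ (n * (n + 1)) := by
      rw [mul_comm, pow_mul, lam_pow_self (hpos (n + 1)).le n.succ_ne_zero]

theorem lam_pow_le (hpos : ∀ k, 0 < M k) (hmono : MonotoneOn (Lam M) (Set.Ici 1)) (hk : 1 ≤ k)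
    (hkj : k ≤ j) : Lam M k ^ j ≤ M j :=
  calc Lam M k ^ j
      ≤ Lam M j ^ j :=
        pow_le_pow_left₀ (lam_pos_s1 (hpos k)).le (hmono hk (hk.trans hkj) hkj) j
    _ = M j := lam_pow_self (hpos j).le (by lia)

theorem le_lam_pow (hpos : ∀ k, 0 < M k) (h0 : M 0 ≤ 1) (hmono : MonotoneOn (Lam M) (Set.Ici 1))
    (hik : i ≤ k) : M i ≤ Lam M k ^ i := by
  rcases i.eq_zero_or_pos with rfl | hi
  · simpa using h0
  · calc M i = Lam M i ^ i := (lam_pow_self (hpos i).le hi.ne').symm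
      _ ≤ Lam M k ^ i :=
        pow_le_pow_left₀ (lam_pos_s1 (hpos i)).le (hmono hi (hi.trans_le hik) hik) i

theorem lam_pow_le_pow_mul (hpos : ∀ k, 0 < M k) (h0 : M 0 ≤ 1)
    (hmono : MonotoneOn (Lam M) (Set.Ici 1)) {A : ℝ} (hA : 1 ≤ A)
    (hmg : ∀ j k, M (j + k) ≤ A ^ (j + k) * M j * M k) (hk : 1 ≤ k) (j : ℕ) :
    Lam M k ^ j ≤ A ^ k * M j := by
  rcases le_total k j with hkj | hjk
  · exact (lam_pow_le hpos hmono hk hkj).trans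
      (le_mul_of_one_le_left (hpos j).le (one_le_pow₀ hA))
  · obtain ⟨i, rfl⟩ := Nat.exists_eq_add_of_le hjk
    refine le_of_mul_le_mul_right ?_ (hpos i)
    calc Lam M (j + i) ^ j * M i
        ≤ Lam M (j + i) ^ j * Lam M (j + i) ^ i :=
          mul_le_mul_of_nonneg_left (le_lam_pow hpos h0 hmono (Nat.le_add_left i j))
            (pow_pos (lam_pos_s1 (hpos _)) j).le
      _ = M (j + i) := by rw [← pow_add, lam_pow_self (hpos _).le (by lia)]
      _ ≤ A ^ (j + i) * M j * M i := hmg j i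

theorem omegaM_le_log (hpos : ∀ k, 0 < M k) {t B : ℝ} (ht : 0 < t)
    (hB : ∀ j, t ^ j ≤ B * M j) : omegaM M t ≤ Real.log B :=
  ciSup_le fun j =>
    Real.log_le_log (div_pos (pow_pos ht j) (hpos j)) ((div_le_iff₀ (hpos j)).2 (hB j))

end

theorem statement1_general (M : ℕ → ℝ) (hpos : ∀ k, 0 < M k) (h0 : M 0 ≤ 1)
    (hmono : MonotoneOn (Lam M) (Set.Ici 1)) (hmg : MG M) :
    ∃ H : ℝ, 1 ≤ H ∧ ∀ k : ℕ, 1 ≤ k → omegaM M (Lam M k) ≤ H * k := by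
  obtain ⟨A, hA, hmg⟩ := hmg
  have one_le_A : 1 ≤ A := by
    have h : 1 * M 1 ≤ A * M 0 * M 1 := by
      simpa only [zero_add, pow_one, one_mul] using hmg 0 1
    exact (le_of_mul_le_mul_right h (hpos 1)).trans (mul_le_of_le_one_right hA.le h0)
  refine ⟨max 1 (Real.log A), le_max_left _ _, fun k hk => ?_⟩
  calc omegaM M (Lam M k)
      ≤ Real.log (A ^ k) :=
        omegaM_le_log hpos (lam_pos_s1 (hpos k)) (lam_pow_le_pow_mul hpos h0 hmono one_le_A hmg hk)
    _ = Real.log A * k := by rw [Real.log_pow, mul_comm]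
    _ ≤ max 1 (Real.log A) * k := mul_le_mul_of_nonneg_right (le_max_right _ _) k.cast_nonneg

/-- Lemma 2 of the paper: if `M` is an admissible weight sequence then there
is `H ≥ 1` with `ω_M(Λ_k) ≤ H k` for all `k ≥ 1`. -/
theorem statement1 (M : ℕ → ℝ) (hM : IsAdmissible M) :
    ∃ H : ℝ, 1 ≤ H ∧ ∀ k : ℕ, 1 ≤ k → omegaM M (Lam M k) ≤ H * k := by
  obtain ⟨⟨hpos, h0, -, hlc, -⟩, -, hmg⟩ := hM
  exact statement1_general M hpos h0.le (monotoneOn_lam_of_sq_le_mul hpos h0.le hlc) hmg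

end
end

section
/- For every s ≥ 1 and σ ≥ 0, the sequence N^{s,σ} defined by N_k^{s,σ} = (k!)^s (log(k+e))^{σk} is an admissible weight sequence: it satisfies N_0 = 1, N_1 ≥ 1, log-convexity N_k^2 ≤ N_{k−1} N_{k+1} for k ≥ 1, N_k^{1/k} → ∞, there exist C, h > 0 with k! ≤ C h^k N_k for all k, and there exists A > 0 with N_{j+k} ≤ A^{j+k} N_j N_k for all j, k ≥ 0. -/
/-!
Write `N_k = (k!)^s (L_k)^σ` with `L_k = log(k+e)^k`. Log-convexity and (mg) pass to products and
to nonnegative powers, so they only have to be checked for `k!` and for `L_k`. The former is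
elementary, with `(j+k)! ≤ 2^{j+k} j! k!`. Log-convexity of `L` is convexity of `x log log(x+e)`,
which in the variable `y = x + e` is the sum of the convex functions `y log log y` and
`-e log log y`; (mg) for `L` comes from `log(x+y) ≤ e^{y/x} log x`, applied with `x = j+e`, `y = k`
and raised to the power `j`. Finally `k! ≤ N_k` gives (i), and (i) with `(k/e)^k ≤ k!` gives
`N_k^{1/k} → ∞`.
-/

open MeasureTheory Filter Finset

noncomputable section

/-- The sequence `N^{s,σ}` with `N_k = (k!)^s (log(k+e))^{σ k}`. -/
def Nseq (s σ : ℝ) (k : ℕ) : ℝ :=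
  (k.factorial : ℝ) ^ s * (Real.log ((k : ℝ) + Real.exp 1)) ^ (σ * (k : ℝ))

/-- Log-convexity `M_k² ≤ M_{k-1} M_{k+1}` for `k ≥ 1`, with the index shifted by one so that no
subtraction occurs, as in `IsWeightSeq`. -/
def IsLogConvex (M : ℕ → ℝ) : Prop :=
  ∀ k, M (k + 1) ^ 2 ≤ M k * M (k + 2)

/-- The sequence `log(k+e)^k`, whose `σ`-th power is the logarithmic factor of `Nseq s σ`. -/
def logPow (k : ℕ) : ℝ :=
  Real.log ((k : ℝ) + Real.exp 1) ^ k

section Closure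

variable {M N : ℕ → ℝ} {s : ℝ}

lemma IsLogConvex.mul (hM : IsLogConvex M) (hN : IsLogConvex N) :
    IsLogConvex fun k => M k * N k := fun k => by
  calc (M (k + 1) * N (k + 1)) ^ 2 = M (k + 1) ^ 2 * N (k + 1) ^ 2 := mul_pow _ _ _
    _ ≤ M k * M (k + 2) * (N k * N (k + 2)) :=
      mul_le_mul (hM k) (hN k) (sq_nonneg _) ((sq_nonneg _).trans (hM k))
    _ = M k * N k * (M (k + 2) * N (k + 2)) := by ring

lemma IsLogConvex.rpow (hM : IsLogConvex M) (hM₀ : ∀ k, 0 ≤ M k) (hs : 0 ≤ s) :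
    IsLogConvex fun k => M k ^ s := fun k => by
  calc (M (k + 1) ^ s) ^ 2 = (M (k + 1) ^ 2) ^ s := (Real.rpow_pow_comm (hM₀ _) _ _)
    _ ≤ (M k * M (k + 2)) ^ s := Real.rpow_le_rpow (sq_nonneg _) (hM k) hs
    _ = M k ^ s * M (k + 2) ^ s := Real.mul_rpow (hM₀ _) (hM₀ _)

lemma MG.mul (hM : MG M) (hN : MG N) (hM₀ : ∀ k, 0 ≤ M k) (hN₀ : ∀ k, 0 ≤ N k) :
    MG fun k => M k * N k := by
  obtain ⟨A, hA, hMA⟩ := hM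
  obtain ⟨B, hB, hNB⟩ := hN
  refine ⟨A * B, mul_pos hA hB, fun j k => ?_⟩
  calc M (j + k) * N (j + k)
      ≤ A ^ (j + k) * M j * M k * (B ^ (j + k) * N j * N k) :=
        mul_le_mul (hMA j k) (hNB j k) (hN₀ _) ((hM₀ _).trans (hMA j k))
    _ = (A * B) ^ (j + k) * (M j * N j) * (M k * N k) := by ring

lemma MG.rpow (hM : MG M) (hM₀ : ∀ k, 0 ≤ M k) (hs : 0 ≤ s) : MG fun k => M k ^ s := by
  obtain ⟨A, hA, hMA⟩ := hM
  refine ⟨A ^ s, Real.rpow_pos_of_pos hA s, fun j k => ?_⟩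
  have hAM : 0 ≤ A ^ (j + k) * M j := mul_nonneg (pow_pos hA _).le (hM₀ j)
  calc M (j + k) ^ s ≤ (A ^ (j + k) * M j * M k) ^ s := Real.rpow_le_rpow (hM₀ _) (hMA j k) hs
    _ = (A ^ s) ^ (j + k) * M j ^ s * M k ^ s := by
      rw [Real.mul_rpow hAM (hM₀ k), Real.mul_rpow (pow_pos hA _).le (hM₀ j),
        Real.rpow_pow_comm hA.le]

end Closure

lemma isLogConvex_exp_of_convexOn {f : ℝ → ℝ} (hf : ConvexOn ℝ (Set.Ici 0) f) :
    IsLogConvex fun k => Real.exp (f k) := fun k => by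
  have hmid : f ((k + 1 : ℕ) : ℝ) ≤ 1 / 2 * f k + 1 / 2 * f ((k + 2 : ℕ) : ℝ) := by
    have h := hf.2 (Set.mem_Ici.2 k.cast_nonneg) (Set.mem_Ici.2 (k + 2).cast_nonneg)
      (by norm_num : (0 : ℝ) ≤ 1 / 2) (by norm_num : (0 : ℝ) ≤ 1 / 2) (by norm_num)
    have hk : (1 / 2 : ℝ) • (k : ℝ) + (1 / 2 : ℝ) • ((k + 2 : ℕ) : ℝ) = ((k + 1 : ℕ) : ℝ) := by
      push_cast [smul_eq_mul]
      ring
    rwa [hk, smul_eq_mul, smul_eq_mul] at h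
  rw [← Real.exp_nat_mul, ← Real.exp_add, Real.exp_le_exp]
  push_cast at hmid ⊢
  linarith

lemma isLogConvex_factorial : IsLogConvex fun k => (k.factorial : ℝ) := fun k => by
  have h : (k + 1).factorial ^ 2 ≤ k.factorial * (k + 2).factorial := by
    calc (k + 1).factorial ^ 2 = k.factorial * ((k + 1) * (k + 1).factorial) := by
          rw [Nat.factorial_succ k]
          ring
      _ ≤ k.factorial * ((k + 2) * (k + 1).factorial) := by
          gcongr
          exact Nat.le_succ _
      _ = k.factorial * (k + 2).factorial := by rw [Nat.factorial_succ (k + 1)]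
  dsimp only
  exact_mod_cast h

lemma mg_factorial : MG fun k => (k.factorial : ℝ) := by
  refine ⟨2, two_pos, fun j k => ?_⟩
  have h : (j + k).factorial ≤ 2 ^ (j + k) * j.factorial * k.factorial := by
    rw [← Nat.add_choose_mul_factorial_mul_factorial j k]
    gcongr
    exact Nat.choose_le_two_pow _ _
  dsimp only
  exact_mod_cast h

lemma div_exp_one_pow_le_factorial (k : ℕ) : ((k : ℝ) / Real.exp 1) ^ k ≤ k.factorial := by
  have h := Real.pow_div_factorial_le_exp (k : ℝ) k.cast_nonneg k
  rw [div_pow, ← Real.exp_nat_mul, mul_one, div_le_iff₀ (Real.exp_pos _), mul_comm]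
  exact (div_le_iff₀ (by positivity)).1 h

section FactBound

variable {M : ℕ → ℝ}

lemma FactBound.exists_pow_le (hM : FactBound M) :
    ∃ c > 0, ∀ k : ℕ, k ≠ 0 → (c * k) ^ k ≤ M k := by
  obtain ⟨C, hC, h, hh, hCM⟩ := hM
  set B := max C 1 * h * Real.exp 1 with hB
  have hB₀ : 0 < B := by positivity
  refine ⟨B⁻¹, inv_pos.2 hB₀, fun k hk => ?_⟩
  have hMk : 0 ≤ M k :=
    (pos_of_mul_pos_right ((Nat.cast_pos.2 k.factorial_pos).trans_le (hCM k)) (by positivity)).le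
  have hCk : C ≤ max C 1 ^ k :=
    (le_max_left C 1).trans (le_self_pow₀ (le_max_right C 1) hk)
  have hkM : ((k : ℝ) / Real.exp 1) ^ k ≤ (max C 1 * h) ^ k * M k :=
    calc ((k : ℝ) / Real.exp 1) ^ k ≤ C * h ^ k * M k :=
          (div_exp_one_pow_le_factorial k).trans (hCM k)
      _ ≤ max C 1 ^ k * h ^ k * M k := by gcongr
      _ = (max C 1 * h) ^ k * M k := by rw [mul_pow]
  calc (B⁻¹ * k) ^ k = (k / Real.exp 1) ^ k / (max C 1 * h) ^ k := by
        rw [← div_pow, hB]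
        congr 1
        field_simp
    _ ≤ M k := (div_le_iff₀' (by positivity)).2 hkM

lemma FactBound.tendsto_Lam_atTop (hM : FactBound M) : Tendsto (Lam M) atTop atTop := by
  obtain ⟨c, hc, hcM⟩ := hM.exists_pow_le
  refine tendsto_atTop_mono' _ ?_ (tendsto_natCast_atTop_atTop.const_mul_atTop hc)
  filter_upwards [eventually_ne_atTop 0] with k hk
  calc c * k = ((c * k) ^ k) ^ (k : ℝ)⁻¹ := (Real.pow_rpow_inv_natCast (by positivity) hk).symm
    _ ≤ Lam M k := Real.rpow_le_rpow (by positivity) (hcM k hk) (by positivity)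

end FactBound

lemma one_le_log {x : ℝ} (hx : Real.exp 1 ≤ x) : 1 ≤ Real.log x :=
  (Real.le_log_iff_exp_le ((Real.exp_pos 1).trans_le hx)).2 hx

lemma one_le_log_add_exp_one {x : ℝ} (hx : 0 ≤ x) : 1 ≤ Real.log (x + Real.exp 1) :=
  one_le_log (le_add_of_nonneg_left hx)

lemma log_add_le_exp_div_mul_log {x y : ℝ} (hx : Real.exp 1 ≤ x) (hy : 0 ≤ y) :
    Real.log (x + y) ≤ Real.exp (y / x) * Real.log x := by
  have hx₀ : 0 < x := (Real.exp_pos 1).trans_le hx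
  have hyx : 0 ≤ y / x := by positivity
  have hlog := one_le_log hx
  calc Real.log (x + y) = Real.log (1 + y / x) + Real.log x := by
        rw [← Real.log_mul (by positivity) hx₀.ne', add_mul, one_mul, div_mul_cancel₀ _ hx₀.ne']
    _ ≤ y / x + Real.log x := by
        gcongr
        linarith [Real.log_le_sub_one_of_pos (show 0 < 1 + y / x by positivity)]
    _ ≤ y / x * Real.log x + Real.log x := by
        gcongr
        exact le_mul_of_one_le_right hyx hlog
    _ = (y / x + 1) * Real.log x := by ring
    _ ≤ Real.exp (y / x) * Real.log x := by
        gcongr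
        exact Real.add_one_le_exp _

lemma log_add_pow_le (n : ℕ) {y : ℝ} (hy : 0 ≤ y) :
    Real.log (n + y + Real.exp 1) ^ n ≤ Real.exp y * Real.log (n + Real.exp 1) ^ n := by
  have he := Real.exp_pos 1
  have hne : Real.exp 1 ≤ n + Real.exp 1 := le_add_of_nonneg_left n.cast_nonneg
  have hlog₀ := one_le_log_add_exp_one (add_nonneg n.cast_nonneg hy)
  have hexp : n * (y / (n + Real.exp 1)) ≤ y := by
    rw [mul_div_left_comm]
    exact mul_le_of_le_one_right hy ((div_le_one (by positivity)).2 (by linarith))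
  calc Real.log (n + y + Real.exp 1) ^ n
      ≤ (Real.exp (y / (n + Real.exp 1)) * Real.log (n + Real.exp 1)) ^ n := by
        gcongr
        rw [add_right_comm]
        exact log_add_le_exp_div_mul_log hne hy
    _ = Real.exp (n * (y / (n + Real.exp 1))) * Real.log (n + Real.exp 1) ^ n := by
        rw [mul_pow, Real.exp_nat_mul]
    _ ≤ Real.exp y * Real.log (n + Real.exp 1) ^ n := by
        have := one_le_log hne
        gcongr

lemma one_le_logPow (k : ℕ) : 1 ≤ logPow k :=
  one_le_pow₀ (one_le_log_add_exp_one k.cast_nonneg)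

lemma logPow_nonneg (k : ℕ) : 0 ≤ logPow k :=
  zero_le_one.trans (one_le_logPow k)

lemma mg_logPow : MG logPow := by
  refine ⟨Real.exp 1, Real.exp_pos 1, fun j k => ?_⟩
  have hjk := one_le_log_add_exp_one (x := j + k) (by positivity)
  have hj := log_add_pow_le j (y := k) k.cast_nonneg
  have hk := log_add_pow_le k (y := j) j.cast_nonneg
  rw [add_comm (k : ℝ) j] at hk
  calc logPow (j + k)
      = Real.log (j + k + Real.exp 1) ^ j * Real.log (j + k + Real.exp 1) ^ k := by
        rw [logPow, pow_add, Nat.cast_add]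
    _ ≤ Real.exp k * logPow j * (Real.exp j * logPow k) :=
        mul_le_mul hj hk (by positivity) (mul_nonneg (Real.exp_pos _).le (logPow_nonneg j))
    _ = Real.exp 1 ^ (j + k) * logPow j * logPow k := by
        rw [pow_add, ← Real.exp_nat_mul, ← Real.exp_nat_mul, mul_one, mul_one]
        ring

lemma hasDerivAt_log_log {x : ℝ} (hx : 1 < x) :
    HasDerivAt (fun y => Real.log (Real.log y)) (x⁻¹ / Real.log x) x :=
  (Real.hasDerivAt_log (by positivity)).log (Real.log_pos hx).ne'

lemma concaveOn_log_log : ConcaveOn ℝ (Set.Ioi 1) fun x => Real.log (Real.log x) := by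
  have hIoi : Set.Ioi (1 : ℝ) ⊆ Set.Ioi 0 := Set.Ioi_subset_Ioi zero_le_one
  have hmaps : Real.log '' Set.Ioi 1 ⊆ Set.Ioi 0 := Set.image_subset_iff.2 fun _ => Real.log_pos
  have hlog := strictConcaveOn_log_Ioi.concaveOn.subset hIoi (convex_Ioi 1)
  have himage : Convex ℝ (Real.log '' Set.Ioi 1) :=
    ((isPreconnected_Ioi.image _ (Real.continuousOn_log.mono fun x hx =>
      (hIoi hx).ne')).ordConnected).convex
  exact (strictConcaveOn_log_Ioi.concaveOn.subset hmaps himage).comp hlog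
    (Real.strictMonoOn_log.monotoneOn.mono hmaps)

lemma convexOn_mul_log_log :
    ConvexOn ℝ (Set.Ici (Real.exp 1)) fun x => x * Real.log (Real.log x) := by
  have one_lt {x : ℝ} (hx : x ∈ Set.Ici (Real.exp 1)) : 1 < x :=
    (Real.one_lt_exp_iff.2 one_pos).trans_le hx
  have hderiv {x : ℝ} (hx : x ∈ Set.Ici (Real.exp 1)) :
      HasDerivAt (fun y => y * Real.log (Real.log y))
        (Real.log (Real.log x) + (Real.log x)⁻¹) x := by
    have hx₀ : x ≠ 0 := (zero_lt_one.trans (one_lt hx)).ne'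
    have h := (hasDerivAt_id' x).fun_mul (hasDerivAt_log_log (one_lt hx))
    rwa [one_mul, ← mul_div_assoc, mul_inv_cancel₀ hx₀, one_div] at h
  refine convexOn_of_hasDerivWithinAt2_nonneg (convex_Ici _)
    (f'' := fun x => x⁻¹ / Real.log x + -x⁻¹ / Real.log x ^ 2)
    (fun x hx => (hderiv hx).continuousAt.continuousWithinAt)
    (fun x hx => (hderiv (interior_subset hx)).hasDerivWithinAt)
    (fun x hx => ?_) (fun x hx => ?_)
  · have hx₁ := one_lt (interior_subset hx)
    exact ((hasDerivAt_log_log hx₁).add ((Real.hasDerivAt_log (by positivity)).inv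
      (Real.log_pos hx₁).ne')).hasDerivWithinAt
  · have hx₀ : 0 < x := zero_lt_one.trans (one_lt (interior_subset hx))
    have hlog : 1 ≤ Real.log x := one_le_log (interior_subset hx)
    have hfactor : x⁻¹ / Real.log x + -x⁻¹ / Real.log x ^ 2 =
        (Real.log x - 1) / (x * Real.log x ^ 2) := by
      field_simp
      ring
    rw [hfactor]
    exact div_nonneg (sub_nonneg.2 hlog) (by positivity)

lemma convexOn_mul_log_log_add_exp_one :
    ConvexOn ℝ (Set.Ici 0) fun x => x * Real.log (Real.log (x + Real.exp 1)) := by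
  have hIci : Set.Ici (Real.exp 1) ⊆ Set.Ioi 1 := Set.Ici_subset_Ioi.2 (by simp)
  have hneg := (concaveOn_log_log.subset hIci (convex_Ici _)).neg.smul (Real.exp_pos 1).le
  refine (((convexOn_mul_log_log.add hneg).translate_left (Real.exp 1)).subset
    (fun x hx => ?_) (convex_Ici 0)).congr fun x _ => ?_
  · simpa using hx
  · simp only [Function.comp_apply, Pi.add_apply, Pi.neg_apply, smul_eq_mul]
    ring

lemma isLogConvex_logPow : IsLogConvex logPow := by
  convert isLogConvex_exp_of_convexOn convexOn_mul_log_log_add_exp_one using 2 with k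
  rw [Real.exp_nat_mul, Real.exp_log (zero_lt_one.trans_le (one_le_log_add_exp_one k.cast_nonneg)),
    logPow]

section Nseq

variable {s σ : ℝ}

lemma Nseq_eq_mul : Nseq s σ = fun k => (k.factorial : ℝ) ^ s * logPow k ^ σ := by
  funext k
  have hlog := one_le_log_add_exp_one (k.cast_nonneg (α := ℝ))
  rw [Nseq, logPow, mul_comm σ, Real.rpow_natCast_mul (zero_le_one.trans hlog)]

lemma isLogConvex_Nseq (hs : 0 ≤ s) (hσ : 0 ≤ σ) : IsLogConvex (Nseq s σ) := by
  rw [Nseq_eq_mul]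
  exact (isLogConvex_factorial.rpow (fun k => k.factorial.cast_nonneg) hs).mul
    (isLogConvex_logPow.rpow logPow_nonneg hσ)

lemma mg_Nseq (hs : 0 ≤ s) (hσ : 0 ≤ σ) : MG (Nseq s σ) := by
  rw [Nseq_eq_mul]
  exact (mg_factorial.rpow (fun k => k.factorial.cast_nonneg) hs).mul
    (mg_logPow.rpow logPow_nonneg hσ) (fun k => Real.rpow_nonneg k.factorial.cast_nonneg s)
    (fun k => Real.rpow_nonneg (logPow_nonneg k) σ)

lemma factorial_le_Nseq (hs : 1 ≤ s) (hσ : 0 ≤ σ) (k : ℕ) : (k.factorial : ℝ) ≤ Nseq s σ k := by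
  have hfact : (1 : ℝ) ≤ k.factorial := Nat.one_le_cast.2 k.factorial_pos
  rw [Nseq_eq_mul]
  calc (k.factorial : ℝ) ≤ (k.factorial : ℝ) ^ s := Real.self_le_rpow_of_one_le hfact hs
    _ ≤ (k.factorial : ℝ) ^ s * logPow k ^ σ :=
      le_mul_of_one_le_right (by positivity) (Real.one_le_rpow (one_le_logPow k) hσ)

lemma factBound_Nseq (hs : 1 ≤ s) (hσ : 0 ≤ σ) : FactBound (Nseq s σ) :=
  ⟨1, one_pos, 1, one_pos, fun k => by simpa using factorial_le_Nseq hs hσ k⟩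

end Nseq

/-- for each `s ≥ 1` and `σ ≥ 0` the sequence `N^{s,σ}` is an admissible
weight sequence. -/
theorem statement6 (s σ : ℝ) (hs : 1 ≤ s) (hσ : 0 ≤ σ) :
    Nseq s σ 0 = 1 ∧ 1 ≤ Nseq s σ 1 ∧
      (∀ k : ℕ, (Nseq s σ (k + 1)) ^ 2 ≤ Nseq s σ k * Nseq s σ (k + 2)) ∧
      Tendsto (fun k : ℕ => (Nseq s σ k) ^ ((k : ℝ)⁻¹)) atTop atTop ∧
      FactBound (Nseq s σ) ∧ MG (Nseq s σ) := by
  have hs₀ : 0 ≤ s := zero_le_one.trans hs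
  have hfact : FactBound (Nseq s σ) := factBound_Nseq hs hσ
  exact ⟨by simp [Nseq], by simpa using factorial_le_Nseq hs hσ 1, isLogConvex_Nseq hs₀ hσ,
    hfact.tendsto_Lam_atTop, hfact, mg_Nseq hs₀ hσ⟩

end
end

section
/- Let U ⊆ ℝ^n be open, V ⋐ U open, and (χ_k)_{k≥1} an Ehrenpreis–Hörmander cut-off sequence supported in U (with constant Q). Let M be a weight sequence satisfying: there exist C, h > 0 with k! ≤ C h^k M_k for all k. Then there is a constant γ > 0 such that for all k ≥ 1 and all u ∈ C^∞(U) with ∂^α u ∈ L²(U) for all |α| ≤ k, the function χ_k u (extended by 0 outside U) satisfies |||χ_k u|||_{ℝ^n,M,k} ≤ γ^k |||u|||_{U,M,k}. -/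
/-!
A multi-index `α` is the same thing as the multiset `s` of its directions. In this form the Leibniz
rule `∂^s (χ u) = ∑_{s₁ + s₂ = s} ∂^{s₁} χ ∂^{s₂} u` has `2^|s|` terms with coefficient one, and it
follows by adding one direction at a time; since `mderiv` applies the coordinate directions in
increasing order, adding a new smallest direction avoids any appeal to symmetry of derivatives.

The factorial bound gives `k ≤ A Λ_k`, because `k^k ≤ e^k k!`. Hence the cut-off bound
`|∂^β χ_k| ≤ (Q k)^|β|` becomes `|∂^β χ_k| ≤ (B Λ_k)^|β|`, and the factor `Λ_k^|β|` is precisely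
what turns the weight `Λ_k^{k - |β + δ|}` of `∂^β χ_k ∂^δ u` into the weight `Λ_k^{k - |δ|}` of
`∂^δ u`. Each of the at most `2^k` Leibniz terms is then at most `B^k |||u|||`, and there are at
most `(k + 1)^n ≤ (2^n)^k` multi-indices.
-/

open MeasureTheory Filter Finset

noncomputable section

/-- Partial derivative in the `i`-th coordinate direction. -/
def pd {n : ℕ} (i : Fin n) (f : (Fin n → ℝ) → ℝ) : (Fin n → ℝ) → ℝ :=
  fun x => fderiv ℝ f x (Pi.single i 1)

/-- The multi-index derivative `∂^α f`. -/
def mderiv {n : ℕ} (α : Fin n → ℕ) (f : (Fin n → ℝ) → ℝ) : (Fin n → ℝ) → ℝ :=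
  ((List.finRange n).flatMap fun i => List.replicate (α i) i).foldr pd f

/-- The length `|α|` of a multi-index. -/
def degree {n : ℕ} (α : Fin n → ℕ) : ℕ := ∑ i, α i

/-- The finite set of all multi-indices `α` with `|α| ≤ k`. -/
def midx (n k : ℕ) : Finset (Fin n → ℕ) :=
  (Fintype.piFinset fun _ : Fin n => Finset.range (k + 1)).filter fun α => degree α ≤ k

/-- The `L²(U)` norm of `g`. -/
def L2 {n : ℕ} (U : Set (Fin n → ℝ)) (g : (Fin n → ℝ) → ℝ) : ℝ :=
  (∫ x in U, (g x) ^ 2) ^ ((1 : ℝ) / 2)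

/-- The weighted Sobolev norm `|||u|||_{U,M,k} = ∑_{|α| ≤ k} Λ_k^{k-|α|} ‖∂^α u‖_{L²(U)}`. -/
def wnorm {n : ℕ} (U : Set (Fin n → ℝ)) (M : ℕ → ℝ) (k : ℕ) (u : (Fin n → ℝ) → ℝ) : ℝ :=
  ∑ α ∈ midx n k, (Lam M k) ^ (k - degree α) * L2 U (mderiv α u)

/-- Ehrenpreis–Hörmander cut-off sequence supported in `U`, centered in `V`,
with constant `Q`. -/
def EHCutoff {n : ℕ} (χ : ℕ → (Fin n → ℝ) → ℝ) (U V : Set (Fin n → ℝ)) (Q : ℝ) : Prop :=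
  ∀ k : ℕ, 1 ≤ k → ContDiff ℝ (⊤ : ℕ∞) (χ k) ∧ HasCompactSupport (χ k) ∧
    tsupport (χ k) ⊆ U ∧ (∀ x ∈ V, χ k x = 1) ∧
    ∀ α : Fin n → ℕ, degree α ≤ k → ∀ x,
      |mderiv α (χ k) x| ≤ Q ^ degree α * (k : ℝ) ^ degree α

section MultiIndex

variable {n : ℕ}

/-- The coordinate directions of the multi-index `α`, repeated with multiplicity and listed in
increasing order, i.e. in the order in which `mderiv α` composes the partial derivatives. -/
def directions (α : Fin n → ℕ) : List (Fin n) :=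
  (List.finRange n).flatMap fun i => List.replicate (α i) i

theorem pairwise_le_directions (α : Fin n → ℕ) : (directions α).Pairwise (· ≤ ·) := by
  refine List.pairwise_flatMap.2 ⟨fun i _ => by simp [List.pairwise_replicate], ?_⟩
  refine (List.pairwise_lt_finRange n).imp fun hij x hx y hy => ?_
  rw [List.eq_of_mem_replicate hx, List.eq_of_mem_replicate hy]
  exact hij.le

theorem count_directions (α : Fin n → ℕ) (i : Fin n) : (directions α).count i = α i := by
  have hcount : ∀ j, (List.replicate (α j) j).count i = if j = i then α j else 0 := fun j => by
    simp [List.count_replicate]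
  simp only [directions, List.count_flatMap, Function.comp_def, hcount]
  rw [← List.ofFn_eq_map, List.sum_ofFn]
  simp

/-- The multi-index of a multiset `s` of coordinate directions: its `i`-th entry is the
multiplicity of `i` in `s`. -/
def multiIndex (s : Multiset (Fin n)) : Fin n → ℕ := fun i => s.count i

theorem multiIndex_surjective : Function.Surjective (multiIndex (n := n)) := fun α =>
  ⟨directions α, funext fun i => (Multiset.coe_count i _).trans (count_directions α i)⟩

theorem degree_multiIndex (s : Multiset (Fin n)) : degree (multiIndex s) = s.card :=
  Multiset.sum_count_eq_card fun i _ => mem_univ i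

theorem directions_multiIndex (s : Multiset (Fin n)) : directions (multiIndex s) = s.sort := by
  refine List.Perm.eq_of_pairwise' (pairwise_le_directions _) (Multiset.pairwise_sort s (· ≤ ·)) ?_
  refine List.perm_iff_count.2 fun i => ?_
  rw [count_directions, multiIndex, ← Multiset.coe_count, Multiset.sort_eq]

theorem mem_midx {k : ℕ} {α : Fin n → ℕ} : α ∈ midx n k ↔ degree α ≤ k := by
  simp only [midx, Finset.mem_filter, Fintype.mem_piFinset, Finset.mem_range, and_iff_right_iff_imp]
  intro hα i
  have hi : α i ≤ degree α := Finset.single_le_sum (fun _ _ => Nat.zero_le _) (mem_univ i)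
  omega

theorem card_midx_le (n k : ℕ) : (midx n k).card ≤ (2 ^ n) ^ k :=
  calc (midx n k).card ≤ (k + 1) ^ n := (Finset.card_filter_le _ _).trans (by simp)
    _ ≤ (2 ^ k) ^ n := Nat.pow_le_pow_left Nat.lt_two_pow_self n
    _ = (2 ^ n) ^ k := pow_right_comm 2 k n

theorem multiset_induction_on_min {ι : Type*} [LinearOrder ι] {P : Multiset ι → Prop}
    (s : Multiset ι) (zero : P 0) (cons : ∀ i s, (∀ j ∈ s, i ≤ j) → P s → P (i ::ₘ s)) : P s := by
  have sorted : ∀ l : List ι, l.Pairwise (· ≤ ·) → P l := by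
    intro l hl
    induction hl with
    | nil => exact zero
    | cons hi _ ih => exact cons _ _ hi ih
  rw [← Multiset.sort_eq s (· ≤ ·)]
  exact sorted _ (Multiset.pairwise_sort s _)

end MultiIndex

section Derivatives

variable {n : ℕ} {U : Set (Fin n → ℝ)} {f g : (Fin n → ℝ) → ℝ}

theorem mderiv_multiIndex_zero : mderiv (multiIndex 0) f = f := by
  change (directions (multiIndex 0)).foldr pd f = f
  rw [directions_multiIndex, Multiset.sort_zero, List.foldr_nil]

theorem mderiv_multiIndex_cons {i : Fin n} {s : Multiset (Fin n)} (hi : ∀ j ∈ s, i ≤ j) :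
    mderiv (multiIndex (i ::ₘ s)) f = pd i (mderiv (multiIndex s) f) := by
  change (directions (multiIndex (i ::ₘ s))).foldr pd f =
    pd i ((directions (multiIndex s)).foldr pd f)
  rw [directions_multiIndex, directions_multiIndex, Multiset.sort_cons i s (· ≤ ·) hi,
    List.foldr_cons]

theorem tsupport_mderiv_subset (α : Fin n → ℕ) : tsupport (mderiv α f) ⊆ tsupport f := by
  obtain ⟨s, rfl⟩ := multiIndex_surjective α
  induction s using multiset_induction_on_min with
  | zero => rw [mderiv_multiIndex_zero]
  | cons i s hi ih =>
    rw [mderiv_multiIndex_cons hi]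
    exact (tsupport_fderiv_apply_subset ℝ (Pi.single i 1)).trans ih

theorem contDiffOn_mderiv (hU : IsOpen U) {m : WithTop ℕ∞} {α : Fin n → ℕ}
    (hf : ContDiffOn ℝ (m + degree α) f U) : ContDiffOn ℝ m (mderiv α f) U := by
  obtain ⟨s, rfl⟩ := multiIndex_surjective α
  rw [degree_multiIndex] at hf
  induction s using multiset_induction_on_min generalizing m with
  | zero => simpa [mderiv_multiIndex_zero] using hf
  | cons i s hi ih =>
    rw [mderiv_multiIndex_cons hi]
    have hs : ContDiffOn ℝ (m + 1) (mderiv (multiIndex s) f) U :=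
      ih (by simpa [add_assoc, add_comm, add_left_comm] using hf)
    exact (hs.fderiv_of_isOpen hU le_rfl).clm_apply contDiffOn_const

theorem contDiffOn_mderiv_of_le (hU : IsOpen U) {m k : ℕ} {α : Fin n → ℕ} (hα : m + degree α ≤ k)
    (hf : ContDiffOn ℝ k f U) : ContDiffOn ℝ m (mderiv α f) U :=
  contDiffOn_mderiv hU (hf.of_le (by exact_mod_cast hα))

theorem differentiableAt_mderiv (hU : IsOpen U) {x : Fin n → ℝ} (hx : x ∈ U) {k : ℕ}
    {α : Fin n → ℕ} (hα : degree α < k) (hf : ContDiffOn ℝ k f U) :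
    DifferentiableAt ℝ (mderiv α f) x :=
  have hα' : 1 + degree α ≤ k := by omega
  ((contDiffOn_mderiv_of_le hU hα' hf).differentiableOn (by simp)).differentiableAt
    (hU.mem_nhds hx)

theorem pd_mul {i : Fin n} {x : Fin n → ℝ} (hf : DifferentiableAt ℝ f x)
    (hg : DifferentiableAt ℝ g x) : pd i (f * g) x = pd i f x * g x + f x * pd i g x := by
  simp only [pd, fderiv_mul hf hg, add_apply, smul_apply, smul_eq_mul]
  ring

theorem pd_mderiv_mul_mderiv {i : Fin n} {s t : Multiset (Fin n)} {x : Fin n → ℝ}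
    (hs : ∀ j ∈ s, i ≤ j) (ht : ∀ j ∈ t, i ≤ j)
    (hf : DifferentiableAt ℝ (mderiv (multiIndex s) f) x)
    (hg : DifferentiableAt ℝ (mderiv (multiIndex t) g) x) :
    pd i (mderiv (multiIndex s) f * mderiv (multiIndex t) g) x =
      mderiv (multiIndex (i ::ₘ s)) f x * mderiv (multiIndex t) g x +
        mderiv (multiIndex s) f x * mderiv (multiIndex (i ::ₘ t)) g x := by
  rw [pd_mul hf hg, mderiv_multiIndex_cons hs, mderiv_multiIndex_cons ht]

theorem pd_multiset_sum {i : Fin n} {x : Fin n → ℝ} {m : Multiset ((Fin n → ℝ) → ℝ)}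
    (hm : ∀ f ∈ m, DifferentiableAt ℝ f x) : pd i m.sum x = (m.map fun f => pd i f x).sum := by
  induction m using Multiset.induction_on with
  | empty => simp [pd]
  | cons f m ih =>
    obtain ⟨hf, hm⟩ := Multiset.forall_mem_cons.1 hm
    have hsum : DifferentiableAt ℝ m.sum x :=
      Multiset.sum_induction (DifferentiableAt ℝ · x) m (fun _ _ => DifferentiableAt.add)
        (differentiableAt_const 0) hm
    rw [Multiset.sum_cons, Multiset.map_cons, Multiset.sum_cons, ← ih hm]
    simp only [pd, fderiv_add hf hsum, add_apply]

theorem mderiv_mul_eqOn (hU : IsOpen U) {s : Multiset (Fin n)}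
    (hf : ContDiffOn ℝ s.card f U) (hg : ContDiffOn ℝ s.card g U) :
    Set.EqOn (mderiv (multiIndex s) (f * g))
      (s.antidiagonal.map fun p =>
        mderiv (multiIndex p.1) f * mderiv (multiIndex p.2) g).sum U := by
  induction s using multiset_induction_on_min with
  | zero => simp [mderiv_multiIndex_zero, Set.EqOn]
  | cons i s hi ih =>
    intro x hx
    rw [Multiset.card_cons] at hf hg
    have hle : (s.card : WithTop ℕ∞) ≤ (s.card + 1 : ℕ) := by exact_mod_cast s.card.le_succ
    have le_of_mem : ∀ p ∈ s.antidiagonal, p.1 ≤ s ∧ p.2 ≤ s := fun p hp => by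
      rw [← Multiset.mem_antidiagonal.1 hp]
      exact ⟨Multiset.le_add_right _ _, Multiset.le_add_left _ _⟩
    have degree_lt : ∀ t ≤ s, degree (multiIndex t) < s.card + 1 := fun t ht => by
      rw [degree_multiIndex]
      exact Nat.lt_succ_of_le (Multiset.card_le_card ht)
    have differentiable_left : ∀ p ∈ s.antidiagonal,
        DifferentiableAt ℝ (mderiv (multiIndex p.1) f) x := fun p hp =>
      differentiableAt_mderiv hU hx (degree_lt _ (le_of_mem p hp).1) hf
    have differentiable_right : ∀ p ∈ s.antidiagonal,
        DifferentiableAt ℝ (mderiv (multiIndex p.2) g) x := fun p hp =>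
      differentiableAt_mderiv hU hx (degree_lt _ (le_of_mem p hp).2) hg
    have pd_term : ∀ p ∈ s.antidiagonal,
        pd i (mderiv (multiIndex p.1) f * mderiv (multiIndex p.2) g) x =
          mderiv (multiIndex (i ::ₘ p.1)) f x * mderiv (multiIndex p.2) g x +
            mderiv (multiIndex p.1) f x * mderiv (multiIndex (i ::ₘ p.2)) g x := fun p hp =>
      pd_mderiv_mul_mderiv (fun j hj => hi j (Multiset.mem_of_le (le_of_mem p hp).1 hj))
        (fun j hj => hi j (Multiset.mem_of_le (le_of_mem p hp).2 hj))
        (differentiable_left p hp) (differentiable_right p hp)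
    have germ := (ih (hf.of_le hle) (hg.of_le hle)).eventuallyEq_of_mem (hU.mem_nhds hx)
    rw [mderiv_multiIndex_cons hi, pd, germ.fderiv_eq, ← pd, pd_multiset_sum, Multiset.map_map,
      Multiset.map_congr rfl (by simpa only [Function.comp_apply] using pd_term)]
    · simp [Multiset.antidiagonal_cons, add_comm, Pi.multiset_sum_apply]
    · simp only [Multiset.mem_map]
      rintro _ ⟨p, hp, rfl⟩
      exact (differentiable_left p hp).mul (differentiable_right p hp)

end Derivatives

section SquareIntegrable

variable {n : ℕ} {U : Set (Fin n → ℝ)} {f g : (Fin n → ℝ) → ℝ}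

theorem L2_nonneg : 0 ≤ L2 U f :=
  Real.rpow_nonneg (integral_nonneg fun _ => sq_nonneg _) _

theorem L2_congr (hU : MeasurableSet U) (hfg : Set.EqOn f g U) : L2 U f = L2 U g := by
  rw [L2, L2, setIntegral_congr_fun hU fun x hx => by rw [hfg hx]]

theorem L2_univ_of_support_subset (hf : Function.support f ⊆ U) : L2 Set.univ f = L2 U f := by
  rw [L2, L2, setIntegral_univ, setIntegral_eq_integral_of_forall_compl_eq_zero]
  intro x hx
  rw [Function.notMem_support.1 fun h => hx (hf h), zero_pow two_ne_zero]

theorem L2_mul_le (hU : MeasurableSet U) {c : ℝ} (hc : 0 ≤ c) (hfc : ∀ x ∈ U, |f x| ≤ c)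
    (hg : MemLp g 2 (volume.restrict U)) : L2 U (f * g) ≤ c * L2 U g := by
  have hsq : ∫ x in U, (f * g) x ^ 2 ≤ c ^ 2 * ∫ x in U, g x ^ 2 := by
    rw [← integral_const_mul]
    refine integral_mono_of_nonneg (.of_forall fun _ => sq_nonneg _) (hg.integrable_sq.const_mul _)
      (ae_restrict_of_forall_mem hU fun x hx => ?_)
    simp only [Pi.mul_apply, mul_pow]
    exact mul_le_mul_of_nonneg_right (sq_le_sq.2 ((hfc x hx).trans (le_abs_self c))) (sq_nonneg _)
  simp only [L2, ← Real.sqrt_eq_rpow]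
  calc √(∫ x in U, (f * g) x ^ 2) ≤ √(c ^ 2 * ∫ x in U, g x ^ 2) := Real.sqrt_le_sqrt hsq
    _ = c * √(∫ x in U, g x ^ 2) := by rw [Real.sqrt_mul (sq_nonneg c), Real.sqrt_sq hc]

theorem L2_eq_lpNorm (hf : AEStronglyMeasurable f (volume.restrict U)) :
    L2 U f = lpNorm f 2 (volume.restrict U) := by
  rw [lpNorm_eq_integral_norm_rpow_toReal two_ne_zero ENNReal.ofNat_ne_top hf]
  simp [L2]

theorem L2_add_le (hf : MemLp f 2 (volume.restrict U)) (hg : MemLp g 2 (volume.restrict U)) :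
    L2 U (f + g) ≤ L2 U f + L2 U g := by
  rw [L2_eq_lpNorm hf.1, L2_eq_lpNorm hg.1, L2_eq_lpNorm (hf.1.add hg.1)]
  exact lpNorm_add_le hf one_le_two

theorem L2_multiset_sum_le {m : Multiset ((Fin n → ℝ) → ℝ)}
    (hm : ∀ f ∈ m, MemLp f 2 (volume.restrict U)) : L2 U m.sum ≤ (m.map (L2 U)).sum :=
  Multiset.le_sum_of_subadditive_on_pred (L2 U) (MemLp · 2 (volume.restrict U)) (by simp [L2])
    MemLp.zero (fun _ _ => L2_add_le) (fun _ _ => MemLp.add) m hm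

theorem L2_mderiv_mul_le (hU : IsOpen U) {s : Multiset (Fin n)}
    (hf : ContDiffOn ℝ s.card f U) (hg : ContDiffOn ℝ s.card g U)
    (hfg : ∀ p ∈ s.antidiagonal,
      MemLp (mderiv (multiIndex p.1) f * mderiv (multiIndex p.2) g) 2 (volume.restrict U)) :
    L2 U (mderiv (multiIndex s) (f * g)) ≤
      (s.antidiagonal.map fun p =>
        L2 U (mderiv (multiIndex p.1) f * mderiv (multiIndex p.2) g)).sum := by
  rw [L2_congr hU.measurableSet (mderiv_mul_eqOn hU hf hg)]
  refine (L2_multiset_sum_le (Multiset.forall_mem_map_iff.2 hfg)).trans_eq ?_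
  rw [Multiset.map_map, Function.comp_def]

end SquareIntegrable

section WeightedNorm

variable {n : ℕ} {M : ℕ → ℝ} {k : ℕ} {U : Set (Fin n → ℝ)} {u v χ : (Fin n → ℝ) → ℝ}

theorem FactBound.pos (hfact : FactBound M) (k : ℕ) : 0 < M k := by
  obtain ⟨C, hC, h, hh, hM⟩ := hfact
  have hfac : (0 : ℝ) < k.factorial := by positivity
  exact pos_of_mul_pos_right (hfac.trans_le (hM k)) (by positivity)

theorem FactBound.exists_le_mul_Lam (hfact : FactBound M) :
    ∃ A : ℝ, ∀ k : ℕ, 1 ≤ k → (k : ℝ) ≤ A * Lam M k := by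
  have hMpos := hfact.pos
  obtain ⟨C, hC, h, hh, hM⟩ := hfact
  refine ⟨Real.exp 1 * max C 1 * h, fun k hk => ?_⟩
  have hk₀ : k ≠ 0 := Nat.one_le_iff_ne_zero.1 hk
  have hLam : 0 ≤ Lam M k := Real.rpow_nonneg (hMpos k).le _
  have hLam_pow : Lam M k ^ k = M k := Real.rpow_inv_natCast_pow (hMpos k).le hk₀
  have hC_pow : C ≤ max C 1 ^ k := (le_max_left C 1).trans (le_self_pow₀ (le_max_right C 1) hk₀)
  have hexp : (k : ℝ) ^ k ≤ Real.exp 1 ^ k * k.factorial := by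
    rw [← Real.exp_nat_mul, mul_one, ← div_le_iff₀ (by positivity)]
    exact Real.pow_div_factorial_le_exp _ k.cast_nonneg k
  refine le_of_pow_le_pow_left₀ hk₀ (by positivity) ?_
  calc (k : ℝ) ^ k ≤ Real.exp 1 ^ k * k.factorial := hexp
    _ ≤ Real.exp 1 ^ k * (C * h ^ k * M k) := by gcongr; exact hM k
    _ ≤ Real.exp 1 ^ k * (max C 1 ^ k * h ^ k * M k) := by have := hMpos k; gcongr
    _ = (Real.exp 1 * max C 1 * h * Lam M k) ^ k := by simp only [mul_pow, hLam_pow]; ring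

theorem wnorm_univ_of_tsupport_subset (hu : tsupport u ⊆ U) :
    wnorm Set.univ M k u = wnorm U M k u :=
  Finset.sum_congr rfl fun α _ => congrArg _ <|
    L2_univ_of_support_subset <| (subset_tsupport _).trans <| (tsupport_mderiv_subset α).trans hu

theorem wnorm_nonneg (hL : 0 ≤ Lam M k) : 0 ≤ wnorm U M k u :=
  Finset.sum_nonneg fun _ _ => mul_nonneg (pow_nonneg hL _) L2_nonneg

theorem Lam_pow_mul_L2_le_wnorm (hL : 0 ≤ Lam M k) {α : Fin n → ℕ} (hα : degree α ≤ k) :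
    Lam M k ^ (k - degree α) * L2 U (mderiv α u) ≤ wnorm U M k u :=
  Finset.single_le_sum (f := fun α => Lam M k ^ (k - degree α) * L2 U (mderiv α u))
    (fun _ _ => mul_nonneg (pow_nonneg hL _) L2_nonneg) (mem_midx.2 hα)

theorem Lam_pow_mul_L2_mul_le (hU : MeasurableSet U) {B : ℝ} (hB : 1 ≤ B) (hL : 0 ≤ Lam M k)
    {β δ : Fin n → ℕ} (hβδ : degree β + degree δ ≤ k)
    (hv : ∀ x ∈ U, |v x| ≤ (B * Lam M k) ^ degree β)
    (hu : MemLp (mderiv δ u) 2 (volume.restrict U)) :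
    Lam M k ^ (k - (degree β + degree δ)) * L2 U (v * mderiv δ u) ≤ B ^ k * wnorm U M k u := by
  have : 0 ≤ B := zero_le_one.trans hB
  have hL2 : L2 U (v * mderiv δ u) ≤ (B * Lam M k) ^ degree β * L2 U (mderiv δ u) :=
    L2_mul_le hU (by positivity) hv hu
  have hweight : k - degree δ = (k - (degree β + degree δ)) + degree β := by omega
  calc Lam M k ^ (k - (degree β + degree δ)) * L2 U (v * mderiv δ u)
      ≤ Lam M k ^ (k - (degree β + degree δ)) *
          ((B * Lam M k) ^ degree β * L2 U (mderiv δ u)) := by gcongr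
    _ = B ^ degree β * (Lam M k ^ (k - degree δ) * L2 U (mderiv δ u)) := by
      rw [hweight, mul_pow, pow_add]; ring
    _ ≤ B ^ k * wnorm U M k u := by
      gcongr
      · exact mul_nonneg (pow_nonneg hL _) L2_nonneg
      · omega
      · exact Lam_pow_mul_L2_le_wnorm hL (by omega)

theorem Lam_pow_mul_L2_mderiv_mul_le (hU : IsOpen U) {B : ℝ} (hB : 1 ≤ B) (hL : 0 ≤ Lam M k)
    (hχ : ContDiffOn ℝ k χ U) (hu : ContDiffOn ℝ k u U)
    (hχB : ∀ α, degree α ≤ k → ∀ x ∈ U, |mderiv α χ x| ≤ (B * Lam M k) ^ degree α)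
    (huL2 : ∀ α, degree α ≤ k → MemLp (mderiv α u) 2 (volume.restrict U))
    {α : Fin n → ℕ} (hα : degree α ≤ k) :
    Lam M k ^ (k - degree α) * L2 U (mderiv α (χ * u)) ≤ (2 * B) ^ k * wnorm U M k u := by
  obtain ⟨s, rfl⟩ := multiIndex_surjective α
  rw [degree_multiIndex] at hα ⊢
  have hs : (s.card : WithTop ℕ∞) ≤ k := by exact_mod_cast hα
  have degree_add : ∀ p ∈ s.antidiagonal,
      degree (multiIndex p.1) + degree (multiIndex p.2) = s.card := fun p hp => by
    rw [degree_multiIndex, degree_multiIndex, ← Multiset.card_add, Multiset.mem_antidiagonal.1 hp]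
  have term_memLp : ∀ p ∈ s.antidiagonal,
      MemLp (mderiv (multiIndex p.1) χ * mderiv (multiIndex p.2) u) 2 (volume.restrict U) := by
    intro p hp
    have hp := degree_add p hp
    have hcont : ContDiffOn ℝ (0 : ℕ) (mderiv (multiIndex p.1) χ) U :=
      contDiffOn_mderiv_of_le hU (by omega) hχ
    exact (huL2 _ (by omega)).mul <|
      memLp_top_of_bound (hcont.continuousOn.aestronglyMeasurable hU.measurableSet) _
        (ae_restrict_of_forall_mem hU.measurableSet (hχB _ (by omega)))
  have term_le : ∀ p ∈ s.antidiagonal,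
      Lam M k ^ (k - s.card) * L2 U (mderiv (multiIndex p.1) χ * mderiv (multiIndex p.2) u) ≤
        B ^ k * wnorm U M k u := by
    intro p hp
    have hp := degree_add p hp
    rw [← hp]
    exact Lam_pow_mul_L2_mul_le hU.measurableSet hB hL (by omega) (hχB _ (by omega))
      (huL2 _ (by omega))
  have hW : 0 ≤ wnorm U M k u := wnorm_nonneg hL
  calc Lam M k ^ (k - s.card) * L2 U (mderiv (multiIndex s) (χ * u))
      ≤ Lam M k ^ (k - s.card) * (s.antidiagonal.map fun p =>
          L2 U (mderiv (multiIndex p.1) χ * mderiv (multiIndex p.2) u)).sum := by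
        gcongr
        exact L2_mderiv_mul_le hU (hχ.of_le hs) (hu.of_le hs) term_memLp
    _ ≤ 2 ^ s.card * (B ^ k * wnorm U M k u) := by
        rw [← Multiset.sum_map_mul_left]
        refine (Multiset.sum_le_card_nsmul _ _ (Multiset.forall_mem_map_iff.2 term_le)).trans_eq ?_
        simp
    _ ≤ 2 ^ k * (B ^ k * wnorm U M k u) := by gcongr; norm_num
    _ = (2 * B) ^ k * wnorm U M k u := by ring

theorem wnorm_mul_le (hU : IsOpen U) {B : ℝ} (hB : 1 ≤ B) (hL : 0 ≤ Lam M k)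
    (hχ : ContDiffOn ℝ k χ U) (hu : ContDiffOn ℝ k u U)
    (hχB : ∀ α, degree α ≤ k → ∀ x ∈ U, |mderiv α χ x| ≤ (B * Lam M k) ^ degree α)
    (huL2 : ∀ α, degree α ≤ k → MemLp (mderiv α u) 2 (volume.restrict U)) :
    wnorm U M k (χ * u) ≤ (2 ^ n * (2 * B)) ^ k * wnorm U M k u := by
  have hW : 0 ≤ wnorm U M k u := wnorm_nonneg hL
  calc wnorm U M k (χ * u)
      ≤ (midx n k).card * ((2 * B) ^ k * wnorm U M k u) := by
        rw [← nsmul_eq_mul]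
        exact Finset.sum_le_card_nsmul _ _ _ fun α hα =>
          Lam_pow_mul_L2_mderiv_mul_le hU hB hL hχ hu hχB huL2 (mem_midx.1 hα)
    _ ≤ (2 ^ n) ^ k * ((2 * B) ^ k * wnorm U M k u) := by
        gcongr
        exact_mod_cast card_midx_le n k
    _ = (2 ^ n * (2 * B)) ^ k * wnorm U M k u := by rw [mul_pow (2 ^ n), mul_assoc]

end WeightedNorm

theorem statement10_general {n : ℕ} {M : ℕ → ℝ} (hfact : FactBound M) {Q : ℝ} (hQ : 0 ≤ Q) :
    ∃ γ : ℝ, 0 < γ ∧ ∀ U : Set (Fin n → ℝ), IsOpen U → ∀ k : ℕ, 1 ≤ k →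
      ∀ χ u : (Fin n → ℝ) → ℝ, ContDiffOn ℝ k χ U → ContDiffOn ℝ k u U → tsupport χ ⊆ U →
      (∀ α, degree α ≤ k → ∀ x ∈ U, |mderiv α χ x| ≤ Q ^ degree α * (k : ℝ) ^ degree α) →
      (∀ α, degree α ≤ k → MemLp (mderiv α u) 2 (volume.restrict U)) →
      wnorm Set.univ M k (U.indicator fun x => χ x * u x) ≤ γ ^ k * wnorm U M k u := by
  obtain ⟨A, hkA⟩ := hfact.exists_le_mul_Lam
  have hB : 1 ≤ max (Q * A) 1 := le_max_right _ _
  refine ⟨2 ^ n * (2 * max (Q * A) 1), by positivity, ?_⟩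
  intro U hU k hk χ u hχ hu hχU hχQ huL2
  have hL : 0 ≤ Lam M k := Real.rpow_nonneg (hfact.pos k).le _
  have hQk : Q * k ≤ max (Q * A) 1 * Lam M k :=
    calc Q * k ≤ Q * (A * Lam M k) := by gcongr; exact hkA k hk
      _ = Q * A * Lam M k := (mul_assoc _ _ _).symm
      _ ≤ max (Q * A) 1 * Lam M k := by gcongr; exact le_max_left _ _
  have hχu : tsupport (χ * u) ⊆ U := tsupport_mul_subset_left.trans hχU
  have hindicator : (U.indicator fun x => χ x * u x) = χ * u :=
    Set.indicator_eq_self.2 ((subset_tsupport (χ * u)).trans hχu)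
  rw [hindicator, wnorm_univ_of_tsupport_subset hχu]
  refine wnorm_mul_le hU hB hL hχ hu (fun α hα x hx => (hχQ α hα x hx).trans ?_) huL2
  rw [← mul_pow]
  gcongr

/-- Lemma 4 of the paper: given an Ehrenpreis–Hörmander cut-off sequence
supported in `U` (centered in `V ⋐ U`) and a weight sequence `M` satisfying the factorial
bound, there is `γ > 0` such that `|||χ_k u|||_{ℝ^n,M,k} ≤ γ^k |||u|||_{U,M,k}` for all
`k ≥ 1` and all `u ∈ C^∞(U)` with `∂^α u ∈ L²(U)` for `|α| ≤ k`; here `χ_k u` is extended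
by `0` outside `U`. -/
theorem statement10 {n : ℕ} (M : ℕ → ℝ) (hM : IsWeightSeq M) (hfact : FactBound M)
    (U V : Set (Fin n → ℝ)) (hU : IsOpen U) (hV : IsOpen V)
    (hVU : closure V ⊆ U) (hVc : IsCompact (closure V))
    (Q : ℝ) (hQ : 0 < Q) (χ : ℕ → (Fin n → ℝ) → ℝ) (hχ : EHCutoff χ U V Q) :
    ∃ γ : ℝ, 0 < γ ∧ ∀ k : ℕ, 1 ≤ k → ∀ u : (Fin n → ℝ) → ℝ,
      ContDiffOn ℝ (⊤ : ℕ∞) u U →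
      (∀ α : Fin n → ℕ, degree α ≤ k → MemLp (mderiv α u) 2 (volume.restrict U)) →
      wnorm Set.univ M k (U.indicator fun x => χ k x * u x) ≤
        γ ^ k * wnorm U M k u := by
  obtain ⟨γ, hγ, hbound⟩ := statement10_general (n := n) hfact hQ.le
  refine ⟨γ, hγ, fun k hk u hu huL2 => ?_⟩
  obtain ⟨hsmooth, -, hsupp, -, hχQ⟩ := hχ k hk
  exact hbound U hU k hk (χ k) u (hsmooth.contDiffOn.of_le (by exact_mod_cast le_top))
    (hu.of_le (by exact_mod_cast le_top)) hsupp (fun α hα x _ => hχQ α hα x) huL2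

end
end
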